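/- arXiv:2204.11761 — 8 statements merged into one kernel-verified Lean document; each statement's English description precedes it below -/
import Mathlib

section
/- Let N be a positive integer. Every matrix in the set A is an element of SL₂(ℤ), and for every M ∈ SL₂(ℤ) there exists M' ∈ A such that M'·M⁻¹ ∈ Γ₀(N); that is, A meets every right coset of Γ₀(N) in SL₂(ℤ). -/
open Matrix CongruenceSubgroup
open scoped MatrixGroups

/-- Admissibility of a choice of representative sets `R c`: for each positive divisor
`c < N` of `N`, with `v = gcd (N/c) c`, the set `R c` consists of nonnegative integers
coprime to `c` forming a complete set of representatives of `(ℤ/vℤ)ˣ`. -/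
def AdmissibleReps (N : ℕ) (R : ℕ → Set ℕ) : Prop :=
  ∀ c : ℕ, c ∣ N → 0 < c → c < N →
    (∀ a ∈ R c, Nat.Coprime a c) ∧
    ∀ u : (ZMod (Nat.gcd (N / c) c))ˣ,
      ∃! a : ℕ, a ∈ R c ∧ (a : ZMod (Nat.gcd (N / c) c)) = (u : ZMod (Nat.gcd (N / c) c))

/-- The set `A` of matrices constructed in the paper: the identity matrix, together with,
for each positive divisor `c < N` of `N` (with `v = gcd (N/c) c`), each `a ∈ R c`, and each
integer `-1 ≤ d < N/v - 1` with `a*d ≡ 1 (mod c)` whenever `a ≠ 0`, the matrix with rows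
`(a, (a*d-1)/c)` and `(c, d)`. -/
def RepSet (N : ℕ) (R : ℕ → Set ℕ) : Set (Matrix (Fin 2) (Fin 2) ℤ) :=
  {1} ∪ {M | ∃ c : ℕ, c ∣ N ∧ 0 < c ∧ c < N ∧ ∃ a ∈ R c, ∃ d : ℤ,
      -1 ≤ d ∧ d < ((N / Nat.gcd (N / c) c : ℕ) : ℤ) - 1 ∧
      (a ≠ 0 → (a : ℤ) * d ≡ 1 [ZMOD (c : ℕ)]) ∧
      M 0 0 = (a : ℤ) ∧ M 0 1 = ((a : ℤ) * d - 1) / (c : ℤ) ∧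
      M 1 0 = (c : ℤ) ∧ M 1 1 = d}

theorem aux_arith (N : ℕ) (hN : 0 < N) (R : ℕ → Set ℕ) (hR : AdmissibleReps N R)
    (r s : ℤ) (hrs : IsCoprime r s) (hlt : ¬ (N : ℤ) ∣ r) :
    ∃ c : ℕ, c ∣ N ∧ 0 < c ∧ c < N ∧ ∃ a ∈ R c, ∃ d : ℤ,
      -1 ≤ d ∧ d < ((N / Nat.gcd (N / c) c : ℕ) : ℤ) - 1 ∧
      (c : ℤ) ∣ (a : ℤ) * d - 1 ∧ (N : ℤ) ∣ c * s - d * r := by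
  obtain ⟨c, hc⟩ : ∃ c, c = Int.gcd r N := ⟨_, rfl⟩
  have hNz : (N : ℤ) ≠ 0 := by exact_mod_cast hN.ne'
  have hc0 : 0 < c := by rw [hc]; exact Int.gcd_pos_of_ne_zero_right _ hNz
  have hcr : (c : ℤ) ∣ r := by rw [hc]; exact Int.gcd_dvd_left ..
  have hcN' : (c : ℤ) ∣ N := by rw [hc]; exact Int.gcd_dvd_right ..
  have hcN : c ∣ N := by exact_mod_cast hcN'
  have hcltN : c < N := by
    refine lt_of_le_of_ne (Nat.le_of_dvd hN hcN) ?_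
    rintro rfl
    exact hlt hcr
  obtain ⟨hR1, hR2⟩ := hR c hcN hc0 hcltN
  refine ⟨c, hcN, hc0, hcltN, ?_⟩
  obtain ⟨n, hn⟩ := hcN
  have hnc : N / c = n := by rw [hn]; exact Nat.mul_div_cancel_left _ hc0
  rw [hnc] at hR2 ⊢
  have hn0 : 0 < n := by
    rcases Nat.eq_zero_or_pos n with h | h
    · subst h; omega
    · exact h
  obtain ⟨v, hv⟩ : ∃ v, v = Nat.gcd n c := ⟨_, rfl⟩
  rw [← hv] at hR2 ⊢
  have hv0 : 0 < v := by rw [hv]; exact Nat.gcd_pos_of_pos_left _ hn0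
  have hvn : v ∣ n := by rw [hv]; exact Nat.gcd_dvd_left ..
  have hvc : v ∣ c := by rw [hv]; exact Nat.gcd_dvd_right ..
  have hvn' : (v : ℤ) ∣ n := by exact_mod_cast hvn
  have hvc' : (v : ℤ) ∣ c := by exact_mod_cast hvc
  have hcz : (c : ℤ) ≠ 0 := by exact_mod_cast hc0.ne'
  have hNcn : (N : ℤ) = c * n := by exact_mod_cast hn
  obtain ⟨r', hr'⟩ := hcr
  -- Bezout for r and N
  have hbez : ∃ t y : ℤ, r' * t + n * y = 1 := by
    have := Int.gcd_eq_gcd_ab r N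
    rw [← hc] at this
    refine ⟨Int.gcdA r N, Int.gcdB r N, mul_left_cancel₀ hcz ?_⟩
    rw [mul_one]
    conv_rhs => rw [this]
    rw [hNcn]
    generalize Int.gcdA r (c * n) = A
    generalize Int.gcdB r (c * n) = B
    rw [hr']; ring
  obtain ⟨t, y, hty⟩ := hbez
  obtain ⟨p, s', hps⟩ := hrs
  have hss : (c : ℤ) ∣ s * s' - 1 := ⟨- (p * r'), by rw [hr'] at hps; linarith⟩
  have hrt : (n : ℤ) ∣ r' * t - 1 := ⟨-y, by linarith⟩
  have hdw : (v : ℤ) ∣ (s * t) * (r' * s') - 1 := by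
    have h1 := hvc'.trans hss
    have h2 := hvn'.trans hrt
    have : (s * t) * (r' * s') - 1 = (s * s' - 1) * (r' * t) + (r' * t - 1) := by ring
    rw [this]
    exact dvd_add (h1.mul_right _) h2
  have hz : ((s * t : ℤ) : ZMod v) * ((r' * s' : ℤ) : ZMod v) = 1 := by
    have := (ZMod.intCast_zmod_eq_zero_iff_dvd _ v).2 hdw
    push_cast at this ⊢
    exact sub_eq_zero.1 this
  obtain ⟨a, ⟨haR, hau⟩, -⟩ := hR2 ⟨((r' * s' : ℤ) : ZMod v), ((s * t : ℤ) : ZMod v),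
    by rw [mul_comm]; exact hz, hz⟩
  have haw : (v : ℤ) ∣ a - r' * s' := by
    apply (ZMod.intCast_zmod_eq_zero_iff_dvd _ v).1
    simp only at hau
    push_cast at hau ⊢
    rw [hau, sub_self]
  have hac : IsCoprime (a : ℤ) (c : ℤ) := Nat.isCoprime_iff_coprime.2 (hR1 a haR)
  obtain ⟨b, z, hbz⟩ := hac
  have hbd : (v : ℤ) ∣ b - s * t := by
    have h1 : (v : ℤ) ∣ b * a - 1 := hvc'.trans ⟨-z, by linarith⟩
    have : b - s * t = (s * t) * (b * a - 1) - b * ((s * t) * (r' * s') - 1)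
      - (s * t) * b * (a - r' * s') := by ring
    rw [this]
    exact dvd_sub (dvd_sub (h1.mul_left _) (hdw.mul_left _)) (haw.mul_left _)
  obtain ⟨k, hk⟩ := hbd
  have hvb := Nat.gcd_eq_gcd_ab n c
  rw [← hv] at hvb
  generalize Nat.gcdA n c = X at hvb
  generalize Nat.gcdB n c = Y at hvb
  obtain ⟨D, hD⟩ : ∃ D : ℤ, D = s * t + n * X * k := ⟨_, rfl⟩
  have hD2 : D = b - c * Y * k := by
    rw [hvb] at hk
    rw [hD]; linarith
  obtain ⟨L, hL⟩ : ∃ L, L = N / v := ⟨_, rfl⟩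
  rw [← hL]
  have hcL : (c : ℤ) ∣ L := by
    have : L = c * (n / v) := by rw [hL, hn, Nat.mul_div_assoc _ hvn]
    exact ⟨((n / v : ℕ) : ℤ), by exact_mod_cast this⟩
  have hnL : (n : ℤ) ∣ L := by
    have : L = n * (c / v) := by rw [hL, hn, mul_comm, Nat.mul_div_assoc _ hvc]
    exact ⟨((c / v : ℕ) : ℤ), by exact_mod_cast this⟩
  have hL0 : 0 < L := by
    rw [hL]; exact Nat.div_pos (Nat.le_of_dvd hN (hvc.trans ⟨n, hn⟩)) hv0
  have hLz : (0 : ℤ) < L := by exact_mod_cast hL0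
  refine ⟨a, haR, (D + 1) % L - 1, ?_, ?_, ?_, ?_⟩
  · have := Int.emod_nonneg (D + 1) hLz.ne'
    linarith
  · have := Int.emod_lt_of_pos (D + 1) hLz
    linarith
  · obtain ⟨q, hq⟩ := hcL
    have := Int.emod_add_mul_ediv (D + 1) L
    generalize (D + 1) / (L : ℤ) = Q at this
    have e : (D + 1) % (L : ℤ) - 1 = b - c * Y * k - c * q * Q := by
      rw [← hD2, ← hq]; linarith
    rw [e]
    exact ⟨-z - a * Y * k - a * q * Q, by linear_combination hbz⟩
  · obtain ⟨q, hq⟩ := hnL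
    have := Int.emod_add_mul_ediv (D + 1) L
    generalize (D + 1) / (L : ℤ) = Q at this
    have e : (D + 1) % (L : ℤ) - 1 = s * t + n * X * k - n * q * Q := by
      rw [← hD, ← hq]; linarith
    rw [e, hNcn, hr']
    exact ⟨s * y - X * k * r' + q * Q * r', by linear_combination (-(c : ℤ) * s) * hty⟩

/-- Every matrix in `A` lies in `SL₂(ℤ)`, and `A` meets every right coset of `Γ₀(N)`
in `SL₂(ℤ)`. -/
theorem repSet_mem_SL_and_surj_on_cosets (N : ℕ) (hN : 0 < N)
    (R : ℕ → Set ℕ) (hR : AdmissibleReps N R) :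
    (∀ M ∈ RepSet N R, M.det = 1) ∧
    ∀ M : SL(2, ℤ), ∃ M' : SL(2, ℤ),
      (M' : Matrix (Fin 2) (Fin 2) ℤ) ∈ RepSet N R ∧ M' * M⁻¹ ∈ Gamma0 N := by
  constructor
  · rintro M (rfl | ⟨c, hcN, hc0, hlt, a, ha, d, -, -, had, h00, h01, h10, h11⟩)
    · simp
    · have hdvd : (c : ℤ) ∣ (a : ℤ) * d - 1 := by
        by_cases h : a = 0
        · have := (hR c hcN hc0 hlt).1 a ha
          rw [h, Nat.coprime_zero_left] at this
          simp [this]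
        · exact (had h).symm.dvd
      rw [Matrix.det_fin_two, h00, h01, h10, h11, Int.ediv_mul_cancel hdvd]
      ring
  · intro M
    by_cases hd : (N : ℤ) ∣ M 1 0
    · refine ⟨1, Or.inl (by simp), ?_⟩
      rw [one_mul]
      apply Subgroup.inv_mem
      rw [Gamma0_mem]
      exact (ZMod.intCast_zmod_eq_zero_iff_dvd _ N).2 hd
    · have hdet := M.det_coe
      rw [Matrix.det_fin_two] at hdet
      have hcop : IsCoprime (M 1 0) (M 1 1) := ⟨-M 0 1, M 0 0, by linarith⟩
      obtain ⟨c, hcN, hc0, hlt, a, ha, d, h1, h2, h3, h4⟩ :=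
        aux_arith N hN R hR _ _ hcop hd
      obtain ⟨M', hM'⟩ : ∃ M' : SL(2, ℤ), (M' : Matrix (Fin 2) (Fin 2) ℤ) =
          !![(a : ℤ), ((a : ℤ) * d - 1) / (c : ℤ); (c : ℤ), d] := by
        refine ⟨⟨!![(a : ℤ), ((a : ℤ) * d - 1) / (c : ℤ); (c : ℤ), d], ?_⟩, rfl⟩
        rw [Matrix.det_fin_two_of, Int.ediv_mul_cancel h3]
        ring
      refine ⟨M', ?_, ?_⟩
      · refine Or.inr ⟨c, hcN, hc0, hlt, a, ha, d, h1, h2, fun _ => ?_, ?_⟩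
        · exact ((Int.modEq_iff_dvd).2 h3).symm
        · simp [hM']
      · rw [Gamma0_mem]
        apply (ZMod.intCast_zmod_eq_zero_iff_dvd _ N).2
        rw [Matrix.SpecialLinearGroup.coe_mul, Matrix.SpecialLinearGroup.coe_inv,
          Matrix.adjugate_fin_two, Matrix.mul_apply, Fin.sum_univ_two, hM']
        convert h4 using 1
        simp
        ring
end

section
/- Let N be a positive integer. No two distinct elements of A represent the same right coset of Γ₀(N) in SL₂(ℤ): if M₁, M₂ ∈ A and M₁·M₂⁻¹ ∈ Γ₀(N), then M₁ = M₂. -/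
open Matrix CongruenceSubgroup
open scoped MatrixGroups

theorem aux_low (M₁ M₂ : SL(2, ℤ)) (N : ℕ) (h : M₁ * M₂⁻¹ ∈ Gamma0 N) :
    (N : ℤ) ∣ M₁ 1 0 * M₂ 1 1 - M₁ 1 1 * M₂ 1 0 := by
  rw [Gamma0_mem] at h
  rw [ZMod.intCast_zmod_eq_zero_iff_dvd] at h
  have e : (M₁ * M₂⁻¹) 1 0 = M₁ 1 0 * M₂ 1 1 - M₁ 1 1 * M₂ 1 0 := by
    change (M₁ * M₂⁻¹ : SL(2, ℤ)).1 1 0 = _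
    rw [Matrix.SpecialLinearGroup.coe_mul, Matrix.SpecialLinearGroup.coe_inv,
      Matrix.adjugate_fin_two, Matrix.mul_apply, Fin.sum_univ_two]
    simp
    ring
  rwa [e] at h

theorem aux_dvd {N a b c d c' d' : ℤ} (hd : a * d - b * c = 1) (hc : c ∣ N)
    (h : N ∣ c * d' - d * c') : c ∣ c' := by
  have h1 : c ∣ d * c' := by
    have := dvd_sub (Dvd.intro d' rfl : c ∣ c * d') (hc.trans h)
    simpa using this
  have h2 : IsCoprime c d := ⟨-b, a, by linarith⟩
  exact h2.dvd_of_dvd_mul_left h1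

/-- No two distinct elements of `A` represent the same right coset of `Γ₀(N)` in `SL₂(ℤ)`. -/
theorem repSet_coset_reps_distinct (N : ℕ) (hN : 0 < N)
    (R : ℕ → Set ℕ) (hR : AdmissibleReps N R)
    (M₁ M₂ : SL(2, ℤ))
    (h₁ : (M₁ : Matrix (Fin 2) (Fin 2) ℤ) ∈ RepSet N R)
    (h₂ : (M₂ : Matrix (Fin 2) (Fin 2) ℤ) ∈ RepSet N R)
    (h : M₁ * M₂⁻¹ ∈ Gamma0 N) : M₁ = M₂ := by
  have hl := aux_low M₁ M₂ N h
  have D1 := M₁.det_coe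
  have D2 := M₂.det_coe
  rw [Matrix.det_fin_two] at D1 D2
  rcases h₁ with h₁ | ⟨c, hcN, hc0, hcl, a, ha, d, hd1, hd2, -, m00, m01, m10, m11⟩
  · rcases h₂ with h₂ | ⟨c', hcN', hc0', hcl', a', ha', d', hd1', hd2', -, n00, n01, n10, n11⟩
    · exact Subtype.ext (h₁.trans h₂.symm)
    · exfalso
      rw [Set.mem_singleton_iff] at h₁
      rw [h₁, n10, n11] at hl
      simp at hl
      exact absurd (Nat.le_of_dvd hc0' (by exact_mod_cast hl)) (by omega)
  · rcases h₂ with h₂ | ⟨c', hcN', hc0', hcl', a', ha', d', hd1', hd2', -, n00, n01, n10, n11⟩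
    · exfalso
      rw [Set.mem_singleton_iff] at h₂
      rw [h₂, m10, m11] at hl
      simp at hl
      exact absurd (Nat.le_of_dvd hc0 (by exact_mod_cast hl)) (by omega)
    · rw [m10, m11, n10, n11] at hl
      rw [m00, m10, m11] at D1
      rw [n00, n10, n11] at D2
      have k1 : (c : ℤ) ∣ c' := aux_dvd D1 (by exact_mod_cast hcN) hl
      have k2 : (c' : ℤ) ∣ c := by
        refine aux_dvd D2 (N := N) (d' := d) (by exact_mod_cast hcN') ?_
        have e : (c' : ℤ) * d - d' * c = -(c * d' - d * c') := by ring
        rw [e, dvd_neg]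
        exact hl
      have hcc : c = c' := Nat.dvd_antisymm (by exact_mod_cast k1) (by exact_mod_cast k2)
      subst hcc
      obtain ⟨q, hq⟩ := hcN
      have hNq : N / c = q := by rw [hq]; exact Nat.mul_div_cancel_left q hc0
      have hcz : (c : ℤ) ≠ 0 := by exact_mod_cast hc0.ne'
      have hqd : (q : ℤ) ∣ d' - d := by
        have : (c : ℤ) * q ∣ c * (d' - d) := by
          have e : (N : ℤ) = c * q := by exact_mod_cast hq
          rw [← e]
          convert hl using 1
          ring
        exact (mul_dvd_mul_iff_left hcz).1 this
      obtain ⟨hcop, huniq⟩ := hR c ⟨q, hq⟩ hc0 hcl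
      rw [hNq] at huniq hd2 hd2'
      have hvq : ((Nat.gcd q c : ℕ) : ℤ) ∣ q := by exact_mod_cast Nat.gcd_dvd_left q c
      have hvc : ((Nat.gcd q c : ℕ) : ℤ) ∣ c := by exact_mod_cast Nat.gcd_dvd_right q c
      have haa : a = a' := by
        have zc : ((c : ℤ) : ZMod (Nat.gcd q c)) = 0 :=
          (ZMod.intCast_zmod_eq_zero_iff_dvd _ _).2 hvc
        have zd : ((d' : ℤ) : ZMod (Nat.gcd q c)) = (d : ZMod (Nat.gcd q c)) := by
          have := (ZMod.intCast_zmod_eq_zero_iff_dvd _ _).2 (hvq.trans hqd)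
          push_cast at this
          exact sub_eq_zero.1 this
        have E1 := congrArg (Int.cast : ℤ → ZMod (Nat.gcd q c)) D1
        have E2 := congrArg (Int.cast : ℤ → ZMod (Nat.gcd q c)) D2
        simp only [Int.cast_sub, Int.cast_mul, zc, zd, mul_zero, sub_zero, Int.cast_one,
          Int.cast_natCast] at E1 E2
        have hu : (a : ZMod (Nat.gcd q c)) = a' := by
          linear_combination (-(a : ZMod (Nat.gcd q c))) * E2 + (a' : ZMod (Nat.gcd q c)) * E1
        obtain ⟨x, -, hx⟩ := huniq ⟨a, d, E1, by rw [mul_comm]; exact E1⟩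
        rw [hx a ⟨ha, rfl⟩, hx a' ⟨ha', hu.symm⟩]
      subst haa
      have hcd : (c : ℤ) ∣ d' - d := by
        have h1 : (c : ℤ) ∣ a * (d' - d) :=
          ⟨M₂ 0 1 - M₁ 0 1, by linear_combination D2 - D1⟩
        have h2 : IsCoprime (c : ℤ) a := ⟨-M₁ 0 1, d, by linear_combination D1⟩
        exact h2.dvd_of_dvd_mul_left h1
      have hlcm : N / Nat.gcd q c = Nat.lcm q c := by
        rw [hq, mul_comm c q]; rfl
      rw [hlcm] at hd2 hd2'
      have hL : ((Nat.lcm q c : ℕ) : ℤ) ∣ d' - d := by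
        rw [Int.natCast_dvd] at hqd hcd ⊢
        exact Nat.lcm_dvd hqd hcd
      have hdd : d' - d = 0 := by
        apply Int.eq_zero_of_abs_lt_dvd hL
        rw [abs_lt]
        constructor <;> linarith
      have hdd' : d' = d := by linarith
      subst hdd'
      apply Subtype.ext
      ext i j
      fin_cases i <;> fin_cases j
      · exact m00.trans n00.symm
      · exact m01.trans n01.symm
      · exact m10.trans n10.symm
      · exact m11.trans n11.symm
end

section
/- Let N be a positive integer and let M₁, M₂ ∈ A have entries (a₁, b₁; c₁, d₁) and (a₂, b₂; c₂, d₂) respectively. If there exists an integer n such that M₁·Tⁿ·M₂⁻¹ ∈ Γ₀(N), then a₁ = a₂ and c₁ = c₂; in other words, no two elements of A map ∞ to distinct Γ₀(N)-equivalent cusps. -/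
open Matrix CongruenceSubgroup
open scoped MatrixGroups

/-- No two elements of `A` map `∞` to distinct `Γ₀(N)`-equivalent cusps: if
`M₁ Tⁿ M₂⁻¹ ∈ Γ₀(N)` for some `n`, then `M₁` and `M₂` have the same left column. -/
theorem repSet_inequivalent_cusps (N : ℕ) (hN : 0 < N)
    (R : ℕ → Set ℕ) (hR : AdmissibleReps N R)
    (M₁ M₂ : SL(2, ℤ))
    (h₁ : (M₁ : Matrix (Fin 2) (Fin 2) ℤ) ∈ RepSet N R)
    (h₂ : (M₂ : Matrix (Fin 2) (Fin 2) ℤ) ∈ RepSet N R)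
    (h : ∃ n : ℤ, M₁ * ModularGroup.T ^ n * M₂⁻¹ ∈ Gamma0 N) :
    (M₁ : Matrix (Fin 2) (Fin 2) ℤ) 0 0 = (M₂ : Matrix (Fin 2) (Fin 2) ℤ) 0 0 ∧
    (M₁ : Matrix (Fin 2) (Fin 2) ℤ) 1 0 = (M₂ : Matrix (Fin 2) (Fin 2) ℤ) 1 0 := by
  obtain ⟨n, hn⟩ := h
  rw [Gamma0_mem] at hn
  have hT := ModularGroup.coe_T_zpow n
  have key : (N : ℤ) ∣ (M₁ 1 0) * (M₂ 1 1) - ((M₁ 1 1) + n * (M₁ 1 0)) * (M₂ 1 0) := by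
    rw [ZMod.intCast_zmod_eq_zero_iff_dvd] at hn
    have e : ((M₁ * ModularGroup.T ^ n * M₂⁻¹ : SL(2, ℤ)) : Matrix (Fin 2) (Fin 2) ℤ) 1 0
        = (M₁ 1 0) * (M₂ 1 1) - ((M₁ 1 1) + n * (M₁ 1 0)) * (M₂ 1 0) := by
      rw [Matrix.SpecialLinearGroup.coe_mul, Matrix.SpecialLinearGroup.coe_mul, hT,
        Matrix.SpecialLinearGroup.coe_inv, Matrix.adjugate_fin_two]
      simp [Matrix.mul_apply, Fin.sum_univ_two]
      ring
    rw [← e]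
    exact hn
  have det₁ := M₁.det_coe
  have det₂ := M₂.det_coe
  rw [Matrix.det_fin_two] at det₁ det₂
  rcases h₁ with h₁ | ⟨c₁, hc₁N, hc₁, hlt₁, a₁, ha₁, d₁, -, -, -, e₁, -, f₁, g₁⟩ <;>
  rcases h₂ with h₂ | ⟨c₂, hc₂N, hc₂, hlt₂, a₂, ha₂, d₂, -, -, -, e₂, -, f₂, g₂⟩
  · rw [Set.mem_singleton_iff] at h₁ h₂
    rw [h₁, h₂]; simp
  · exfalso
    rw [Set.mem_singleton_iff] at h₁
    rw [h₁, f₂] at key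
    simp at key
    have := Nat.le_of_dvd hc₂ (by exact_mod_cast key)
    omega
  · exfalso
    rw [Set.mem_singleton_iff] at h₂
    rw [h₂, f₁] at key
    simp at key
    have := Nat.le_of_dvd hc₁ (by exact_mod_cast key)
    omega
  · rw [e₁, f₁, g₁] at det₁
    rw [e₂, f₂, g₂] at det₂
    rw [f₁, f₂, g₁, g₂] at key
    have cop₁ : IsCoprime (c₁ : ℤ) d₁ := ⟨-(M₁ : Matrix (Fin 2) (Fin 2) ℤ) 0 1, a₁, by linarith⟩
    have cop₂ : IsCoprime (c₂ : ℤ) d₂ := ⟨-(M₂ : Matrix (Fin 2) (Fin 2) ℤ) 0 1, a₂, by linarith⟩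
    have hd₁ : (c₁ : ℤ) ∣ c₂ := by
      refine cop₁.dvd_of_dvd_mul_left ?_
      have h1 := (Int.natCast_dvd_natCast.2 hc₁N).trans key
      have h2 : (c₁ : ℤ) ∣ c₁ * (d₂ - n * c₂) := dvd_mul_right _ _
      have h3 := dvd_sub h2 h1
      ring_nf at h3 ⊢
      exact h3
    have hd₂ : (c₂ : ℤ) ∣ c₁ := by
      refine cop₂.dvd_of_dvd_mul_left ?_
      have h1 := (Int.natCast_dvd_natCast.2 hc₂N).trans key
      have h2 : (c₂ : ℤ) ∣ c₂ * (d₁ + n * c₁) := dvd_mul_right _ _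
      have h3 := dvd_add h2 h1
      ring_nf at h3 ⊢
      exact h3
    have hc : c₁ = c₂ :=
      Nat.dvd_antisymm (Int.natCast_dvd_natCast.1 hd₁) (Int.natCast_dvd_natCast.1 hd₂)
    subst hc
    refine ⟨?_, by rw [f₁, f₂]⟩
    rw [e₁, e₂]
    obtain ⟨m, rfl⟩ := hc₁N
    obtain ⟨-, hu⟩ := hR c₁ (dvd_mul_right _ _) hc₁ hlt₁
    rw [Nat.mul_div_cancel_left m hc₁] at hu
    have hvc : ((Nat.gcd m c₁ : ℕ) : ℤ) ∣ c₁ := Int.natCast_dvd_natCast.2 (Nat.gcd_dvd_right _ _)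
    have hvm : ((Nat.gcd m c₁ : ℕ) : ℤ) ∣ m := Int.natCast_dvd_natCast.2 (Nat.gcd_dvd_left _ _)
    have hm : (m : ℤ) ∣ d₂ - d₁ - n * c₁ := by
      have hc0 : (c₁ : ℤ) ≠ 0 := by exact_mod_cast hc₁.ne'
      obtain ⟨k, hk⟩ := key
      refine ⟨k, mul_left_cancel₀ hc0 ?_⟩
      push_cast at hk
      linarith
    generalize Nat.gcd m c₁ = v at hu hvc hvm
    have z1 := (ZMod.intCast_zmod_eq_zero_iff_dvd (d₂ - d₁ - n * c₁) v).2 (hvm.trans hm)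
    have z2 := (ZMod.intCast_zmod_eq_zero_iff_dvd (c₁ : ℤ) v).2 hvc
    have t1 := congrArg (Int.cast : ℤ → ZMod v) det₁
    have t2 := congrArg (Int.cast : ℤ → ZMod v) det₂
    push_cast at z1 z2 t1 t2
    rw [z2] at z1 t1 t2
    simp only [mul_zero, sub_zero] at z1 t1 t2
    rw [sub_eq_zero] at z1
    rw [z1] at t2
    have hav : (a₂ : ZMod v) = a₁ := by
      calc (a₂ : ZMod v) = a₂ * (a₁ * d₁) := by rw [t1, mul_one]
        _ = a₁ * (a₂ * d₁) := by ring
        _ = a₁ := by rw [t2, mul_one]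
    have := (hu ⟨(a₁ : ZMod v), (d₁ : ZMod v), t1, by rw [mul_comm]; exact t1⟩).unique
      ⟨ha₁, rfl⟩ ⟨ha₂, hav⟩
    rw [this]
end

section
/- Let N be a positive integer and M₁ ∈ SL₂(ℤ) with bottom row (c₁, d₁). Then there exists M₂ ∈ SL₂(ℤ) whose lower-left entry equals gcd(d₁, N) and such that M₂·S·M₁⁻¹ ∈ Γ₀(N). -/
open Matrix CongruenceSubgroup
open scoped MatrixGroups

theorem aux_unit (N : ℕ) (hN : 0 < N) (d : ℤ) :
    ∃ u v k m : ℤ, v * u = 1 + N * k ∧ d = Int.gcd d N * u + N * m := by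
  have hgpos : 0 < Int.gcd d N := Int.gcd_pos_of_ne_zero_right _ (by exact_mod_cast hN.ne')
  obtain ⟨d', hd⟩ : ((Int.gcd d N : ℕ) : ℤ) ∣ d := Int.gcd_dvd_left ..
  obtain ⟨n, hn⟩ : Int.gcd d N ∣ N := by exact_mod_cast Int.gcd_dvd_right d (N : ℤ)
  generalize hg : Int.gcd d N = g at *
  have hcop : IsCoprime d' (n : ℤ) := by
    rw [Int.isCoprime_iff_gcd_eq_one]
    have h := hg
    rw [hd, hn, Nat.cast_mul, Int.gcd_mul_left] at h
    simp only [Int.natAbs_natCast] at h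
    exact Nat.eq_of_mul_eq_mul_left hgpos (by rw [h, mul_one])
  have hnN : n ∣ N := ⟨g, by rw [hn, mul_comm]⟩
  have : NeZero N := ⟨hN.ne'⟩
  obtain ⟨x, y, hxy⟩ := hcop
  have h1 : (x : ZMod n) * (d' : ZMod n) = 1 := by
    have := congrArg (Int.cast : ℤ → ZMod n) hxy
    simpa using this
  let w : (ZMod n)ˣ := ⟨d', x, by rw [mul_comm]; exact h1, h1⟩
  obtain ⟨U, hU⟩ := ZMod.unitsMap_surjective hnN w
  obtain ⟨u, hu⟩ := ZMod.intCast_surjective (U : ZMod N)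
  obtain ⟨v, hv⟩ := ZMod.intCast_surjective ((U⁻¹ : (ZMod N)ˣ) : ZMod N)
  have e1 : ((1 : ℤ) : ZMod N) = ((v * u : ℤ) : ZMod N) := by
    push_cast; rw [hu, hv]; simp
  have e2 : ((u : ℤ) : ZMod n) = ((d' : ℤ) : ZMod n) := by
    have := congrArg Units.val hU
    rw [ZMod.unitsMap_val, ← hu] at this
    rw [ZMod.cast_intCast hnN] at this
    exact this
  rw [ZMod.intCast_eq_intCast_iff_dvd_sub] at e1 e2
  obtain ⟨k, hk⟩ := e1
  obtain ⟨m, hm⟩ := e2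
  refine ⟨u, v, k, m, by linarith, ?_⟩
  rw [hd, hn]; push_cast
  linear_combination (g : ℤ) * hm

/-- For any `M₁ ∈ SL₂(ℤ)` with bottom row `(c₁, d₁)`, there is `M₂ ∈ SL₂(ℤ)` whose
lower-left entry is `gcd(d₁, N)` and with `M₂·S·M₁⁻¹ ∈ Γ₀(N)`. -/
theorem exists_rep_adjacent_cusp (N : ℕ) (hN : 0 < N) (M₁ : SL(2, ℤ)) :
    ∃ M₂ : SL(2, ℤ),
      (M₂ : Matrix (Fin 2) (Fin 2) ℤ) 1 0 =
        (Int.gcd ((M₁ : Matrix (Fin 2) (Fin 2) ℤ) 1 1) (N : ℤ) : ℤ) ∧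
      M₂ * ModularGroup.S * M₁⁻¹ ∈ Gamma0 N := by
  have hdet := M₁.det_coe
  rw [Matrix.det_fin_two] at hdet
  obtain ⟨u, v, k, m, h1, h2⟩ := aux_unit N hN ((M₁ : Matrix (Fin 2) (Fin 2) ℤ) 1 1)
  have hgd := Int.gcd_dvd_left ((M₁ : Matrix (Fin 2) (Fin 2) ℤ) 1 1) (N : ℤ)
  have hgN := Int.gcd_dvd_right ((M₁ : Matrix (Fin 2) (Fin 2) ℤ) 1 1) (N : ℤ)
  generalize ((Int.gcd ((M₁ : Matrix (Fin 2) (Fin 2) ℤ) 1 1) (N : ℤ) : ℕ) : ℤ) = g at *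
  have c1 : IsCoprime g ((M₁ : Matrix (Fin 2) (Fin 2) ℤ) 1 0) :=
    IsCoprime.of_isCoprime_of_dvd_left
      ⟨(M₁ : Matrix (Fin 2) (Fin 2) ℤ) 0 0, -(M₁ : Matrix (Fin 2) (Fin 2) ℤ) 0 1,
        by linarith⟩ hgd
  have c2 : IsCoprime g v :=
    IsCoprime.of_isCoprime_of_dvd_left ⟨-k, u, by linarith⟩ hgN
  obtain ⟨p, q, hpq⟩ := c1.mul_right c2
  obtain ⟨A, hA⟩ : ∃ A : SL(2, ℤ), (A : Matrix (Fin 2) (Fin 2) ℤ) =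
      !![-q, -p; g, -((M₁ : Matrix (Fin 2) (Fin 2) ℤ) 1 0 * v)] :=
    ⟨⟨_, by rw [Matrix.det_fin_two_of]; linarith⟩, rfl⟩
  refine ⟨A, by simp [hA], ?_⟩
  · rw [Gamma0_mem, ZMod.intCast_zmod_eq_zero_iff_dvd]
    change (N : ℤ) ∣ ((A : Matrix (Fin 2) (Fin 2) ℤ) *
      (ModularGroup.S : Matrix (Fin 2) (Fin 2) ℤ) *
      Matrix.adjugate (M₁ : Matrix (Fin 2) (Fin 2) ℤ)) 1 0
    rw [hA,
      ModularGroup.coe_S]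
    simp [Matrix.mul_apply, Fin.sum_univ_two, Matrix.adjugate_fin_two]
    refine ⟨-((M₁ : Matrix (Fin 2) (Fin 2) ℤ) 1 0) * (v * m + g * k), ?_⟩
    linear_combination (-(M₁ : Matrix (Fin 2) (Fin 2) ℤ) 1 0 * v) * h2 - (M₁ : Matrix (Fin 2) (Fin 2) ℤ) 1 0 * g * h1
end

section
/- Let N be a positive integer, p a prime not dividing N, and n, a, b integers satisfying b ≡ n(1−p) (mod N) and ab ≡ an − 1 (mod p). Let M be the matrix with rows (0, −1) and (1, n), and let U_a, U_b be the matrices with rows (1, a),(0, p) and (1, b),(0, p) respectively. Then p divides ab − an(1−p) + 1, the matrix M' with rows (p, −a) and (n(1−p) − b, (ab − an(1−p) + 1)/p) has integer entries and determinant 1, its lower-left entry is divisible by N (so M' ∈ Γ₀(N)), and M'·U_a·M = M·U_b. -/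
open Matrix

/-- Matrix identity underlying the Hecke operator computation: given `b ≡ n(1−p) (mod N)`
and `ab ≡ an − 1 (mod p)`, the matrix `M' = (p, −a; n(1−p)−b, (ab−an(1−p)+1)/p)` has
integer entries, determinant `1`, lower-left entry divisible by `N`, and satisfies
`M'·U_a·M = M·U_b`. -/
theorem hecke_matrix_identity (N : ℕ) (hN : 0 < N) (p : ℕ) (hp : p.Prime)
    (hpN : ¬ (p : ℤ) ∣ (N : ℤ)) (n a b : ℤ)
    (hb : b ≡ n * (1 - (p : ℤ)) [ZMOD (N : ℤ)])
    (hab : a * b ≡ a * n - 1 [ZMOD (p : ℤ)])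
    (M Ua Ub M' : Matrix (Fin 2) (Fin 2) ℚ)
    (hM : M = !![0, -1; 1, (n : ℚ)])
    (hUa : Ua = !![1, (a : ℚ); 0, (p : ℚ)])
    (hUb : Ub = !![1, (b : ℚ); 0, (p : ℚ)])
    (hM' : M' = !![(p : ℚ), -(a : ℚ);
        (n : ℚ) * (1 - (p : ℚ)) - (b : ℚ),
        ((a * b - a * n * (1 - (p : ℤ)) + 1 : ℤ) : ℚ) / (p : ℚ)]) :
    ((p : ℤ) ∣ a * b - a * n * (1 - (p : ℤ)) + 1) ∧
    M'.det = 1 ∧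
    ((N : ℤ) ∣ n * (1 - (p : ℤ)) - b) ∧
    M' * Ua * M = M * Ub := by
  have hp0 : (p : ℚ) ≠ 0 := by exact_mod_cast hp.ne_zero
  subst hM hUa hUb hM'
  refine ⟨?_, ?_, hb.dvd, ?_⟩
  · obtain ⟨k, hk⟩ := hab.symm.dvd
    exact ⟨k + a * n, by linear_combination hk⟩
  · rw [Matrix.det_fin_two_of]
    push_cast
    field_simp
    ring
  · ext i j
    fin_cases i <;> fin_cases j <;> simp [Matrix.mul_apply, Fin.sum_univ_two, -mul_eq_zero] <;>
      field_simp <;> ring_nf <;> simp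
end

section
/- Let N be a positive integer, χ a Dirichlet character modulo N, and f : ℍ → ℂ automorphic of level N and character χ. Let p be a prime not dividing N, and n, a, b integers satisfying b ≡ n(1−p) (mod N) and ab ≡ an − 1 (mod p). Let M be the matrix with rows (0, −1) and (1, n), and let U_a, U_b be the matrices with rows (1, a),(0, p) and (1, b),(0, p) respectively. Then for every z ∈ ℍ, f(U_a·(M·z)) = χ(p)·f(M·(U_b·z)), where · denotes the Möbius action. -/
open Matrix CongruenceSubgroup UpperHalfPlane
open scoped MatrixGroups

/-- The Möbius action of an integer matrix on a complex number. -/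
noncomputable def moebius (g : Matrix (Fin 2) (Fin 2) ℤ) (z : ℂ) : ℂ :=
  ((g 0 0 : ℂ) * z + (g 0 1 : ℂ)) / ((g 1 0 : ℂ) * z + (g 1 1 : ℂ))

/-- `f : ℍ → ℂ` is automorphic of level `N` and character `χ` if
`f(γ·z) = χ(d_γ)·f(z)` for all `γ ∈ Γ₀(N)`. -/
def IsAutomorphic (N : ℕ) (χ : DirichletCharacter ℂ N) (f : ℍ → ℂ) : Prop :=
  ∀ γ ∈ Gamma0 N, ∀ z : ℍ,
    f (γ • z) = χ (((γ : Matrix (Fin 2) (Fin 2) ℤ) 1 1 : ZMod N)) * f z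

/-- For `f` automorphic of level `N` and character `χ`, with `b ≡ n(1−p) (mod N)` and
`ab ≡ an − 1 (mod p)`, one has `f(U_a·(M·z)) = χ(p)·f(M·(U_b·z))` for every `z ∈ ℍ`,
where `M = (0,−1;1,n)`, `U_a = (1,a;0,p)`, `U_b = (1,b;0,p)`. -/
theorem automorphic_hecke_relation (N : ℕ) (hN : 0 < N)
    (χ : DirichletCharacter ℂ N) (f : ℍ → ℂ) (hf : IsAutomorphic N χ f)
    (p : ℕ) (hp : p.Prime) (hpN : ¬ (p : ℤ) ∣ (N : ℤ)) (n a b : ℤ)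
    (hb : b ≡ n * (1 - (p : ℤ)) [ZMOD (N : ℤ)])
    (hab : a * b ≡ a * n - 1 [ZMOD (p : ℤ)])
    (z w₁ w₂ : ℍ)
    (hw₁ : (w₁ : ℂ) = moebius !![1, a; 0, (p : ℤ)] (moebius !![0, -1; 1, n] (z : ℂ)))
    (hw₂ : (w₂ : ℂ) = moebius !![0, -1; 1, n] (moebius !![1, b; 0, (p : ℤ)] (z : ℂ))) :
    f w₁ = χ ((p : ℕ) : ZMod N) * f w₂ := by
  obtain ⟨k, hk⟩ := hab.symm.dvd
  have hp0 : (p : ℂ) ≠ 0 := by exact_mod_cast hp.ne_zero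
  have hk' : (a : ℂ) * b - (a * n - 1) = p * k := by exact_mod_cast hk
  let γ : SL(2, ℤ) := ⟨!![k + a * n, a; b + n * p - n, (p : ℤ)], by
    rw [Matrix.det_fin_two_of]
    linear_combination -hk⟩
  have hγ : γ ∈ Gamma0 N := by
    rw [Gamma0_mem]
    change ((b + n * p - n : ℤ) : ZMod N) = 0
    rw [ZMod.intCast_zmod_eq_zero_iff_dvd]
    have := hb.symm.dvd
    convert this using 1
    ring
  have key : w₁ = γ • w₂ := by
    apply UpperHalfPlane.ext
    have hz : ∀ m : ℤ, (z : ℂ) + m ≠ 0 := by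
      intro m h
      have := congrArg Complex.im h
      simp at this
      exact z.im_ne_zero this
    have h1 : (w₁ : ℂ) = (a * z + (a * n - 1)) / (p * (z + n)) := by
      have := hz n
      rw [hw₁]
      simp [moebius]
      field_simp
      ring
    have h2 : (w₂ : ℂ) = -p / (z + (b + n * p)) := by
      have := hz (b + n * p)
      push_cast at this
      have h3 : ((z : ℂ) + b) / p + n ≠ 0 := by
        intro h
        apply this
        field_simp at h
        linear_combination h
      rw [hw₂]
      simp [moebius]
      field_simp
      ring
    rw [UpperHalfPlane.specialLinearGroup_apply]
    have e := hz (b + n * p)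
    push_cast at e
    have e' := hz n
    simp [γ]
    have h4 : ((b : ℂ) + n * p - n) * w₂ + p = p * (z + n) / (z + (b + n * p)) := by
      rw [h2]; field_simp; ring
    have h5 : ((k : ℂ) + a * n) * w₂ + a = (a * z + (a * n - 1)) / (z + (b + n * p)) := by
      rw [h2]; field_simp; linear_combination hk'
    rw [h4, h5, h1]
    field_simp
  rw [key, hf γ hγ w₂]
  simp [γ]
end

section
/- Let N be a positive integer, c a positive divisor of N, and v = gcd(c, N/c). Let M ∈ SL₂(ℤ) have entries (a, b; c, d), and let d' be an integer with d' ≡ d (mod N/v). Then c divides d' − d; moreover, setting n = (d' − d)/c, the integer n is a multiple of N/(c·v), and M·Tⁿ·M⁻¹ ∈ Γ₀(N). The matrix M·Tⁿ has bottom row (c, d'). -/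
open Matrix CongruenceSubgroup
open scoped MatrixGroups

/-- Let `c` be a positive divisor of `N`, `v = gcd(c, N/c)`, and let `M ∈ SL₂(ℤ)` have
bottom row `(c, d)`. If `d' ≡ d (mod N/v)`, then `c ∣ d' − d`, the integer
`n = (d' − d)/c` is a multiple of the cusp width `N/(c·v)`, `M·Tⁿ·M⁻¹ ∈ Γ₀(N)`, and
`M·Tⁿ` has bottom row `(c, d')`. -/
theorem translate_to_canonical_bottom_row (N : ℕ) (hN : 0 < N)
    (c : ℕ) (hc : 0 < c) (hcN : c ∣ N)
    (M : SL(2, ℤ)) (hMc : (M : Matrix (Fin 2) (Fin 2) ℤ) 1 0 = (c : ℤ))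
    (d' : ℤ)
    (hd' : d' ≡ (M : Matrix (Fin 2) (Fin 2) ℤ) 1 1
      [ZMOD ((N / Nat.gcd c (N / c) : ℕ) : ℤ)]) :
    (c : ℤ) ∣ d' - (M : Matrix (Fin 2) (Fin 2) ℤ) 1 1 ∧
    ((N / (c * Nat.gcd c (N / c)) : ℕ) : ℤ) ∣
      (d' - (M : Matrix (Fin 2) (Fin 2) ℤ) 1 1) / (c : ℤ) ∧
    M * ModularGroup.T ^ ((d' - (M : Matrix (Fin 2) (Fin 2) ℤ) 1 1) / (c : ℤ)) * M⁻¹ ∈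
      Gamma0 N ∧
    ((M * ModularGroup.T ^ ((d' - (M : Matrix (Fin 2) (Fin 2) ℤ) 1 1) / (c : ℤ)) :
        SL(2, ℤ)) : Matrix (Fin 2) (Fin 2) ℤ) 1 0 = (c : ℤ) ∧
    ((M * ModularGroup.T ^ ((d' - (M : Matrix (Fin 2) (Fin 2) ℤ) 1 1) / (c : ℤ)) :
        SL(2, ℤ)) : Matrix (Fin 2) (Fin 2) ℤ) 1 1 = d' := by
  obtain ⟨m, rfl⟩ := hcN
  have hm : c * m / c = m := Nat.mul_div_cancel_left m hc
  rw [hm] at hd' ⊢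
  have hv : 0 < Nat.gcd c m := Nat.gcd_pos_of_pos_left _ hc
  obtain ⟨w, hw⟩ := Nat.gcd_dvd_right c m
  obtain ⟨e, he⟩ := Nat.gcd_dvd_left c m
  generalize Nat.gcd c m = v at *
  have h1 : c * m / v = c * w := by
    rw [hw, show c * (v * w) = v * (c * w) by ring, Nat.mul_div_cancel_left _ hv]
  have h2 : c * m / (c * v) = w := by
    rw [hw, ← mul_assoc, Nat.mul_div_cancel_left _ (Nat.mul_pos hc hv)]
  rw [h1] at hd'
  rw [h2]
  obtain ⟨k, hk⟩ := hd'.symm.dvd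
  have hc' : (c : ℤ) ≠ 0 := by exact_mod_cast hc.ne'
  have hn : (d' - (M : Matrix (Fin 2) (Fin 2) ℤ) 1 1) / (c : ℤ) = w * k := by
    rw [hk]; push_cast; rw [mul_assoc, Int.mul_ediv_cancel_left _ hc']
  rw [hn]
  have hk' : d' - (M : Matrix (Fin 2) (Fin 2) ℤ) 1 1 = c * (w * k) := by
    rw [hk]; push_cast; ring
  refine ⟨⟨_, hk'⟩, ⟨k, rfl⟩, ?_, ?_, ?_⟩
  · rw [Gamma0_mem, ZMod.intCast_zmod_eq_zero_iff_dvd]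
    have hz : ((M * ModularGroup.T ^ ((w : ℤ) * k) * M⁻¹ : SL(2, ℤ)) :
        Matrix (Fin 2) (Fin 2) ℤ) 1 0 = -(w * k * c ^ 2) := by
      simp [ModularGroup.coe_T_zpow, SpecialLinearGroup.coe_inv, adjugate_fin_two,
        Matrix.mul_apply, Fin.sum_univ_two, hMc]
      ring
    rw [hz]
    refine ⟨-(k * e), ?_⟩
    have he' : (c : ℤ) = v * e := by exact_mod_cast he
    rw [hw]; push_cast
    linear_combination (-(w * k * c : ℤ)) * he'
  · simp [ModularGroup.coe_T_zpow, Matrix.mul_apply, Fin.sum_univ_two, hMc]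
  · simp [ModularGroup.coe_T_zpow, Matrix.mul_apply, Fin.sum_univ_two, hMc]
    linarith
end

section
/- Let N be a positive integer. For every z ∈ ℍ there exist γ ∈ Γ₀(N) and M ∈ A such that M⁻¹·(γ·z) lies in the closure of the standard fundamental domain 𝒟 = {z ∈ ℍ : |z| > 1, |Re(z)| < 1/2} for SL₂(ℤ); that is, the union of the translates M·𝒟̄ over M ∈ A contains a representative of every Γ₀(N)-orbit in ℍ. -/
open Matrix CongruenceSubgroup
open scoped MatrixGroups

open UpperHalfPlane in
/-- The standard open fundamental domain `𝒟 = {z ∈ ℍ : |z| > 1, |Re z| < 1/2}`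
for `SL₂(ℤ)`. -/
def stdFundDom : Set UpperHalfPlane :=
  {z : UpperHalfPlane | 1 < ‖(z : ℂ)‖ ∧ |(z : ℂ).re| < 1 / 2}

theorem aux_unit_s17 (v : ℕ) (x m : ℤ) (h : IsCoprime x m) (hv : (v : ℤ) ∣ m) :
    IsUnit (x : ZMod v) := by
  obtain ⟨k, rfl⟩ := hv
  obtain ⟨s, t, hst⟩ := h
  refine IsUnit.of_mul_eq_one (s : ZMod v) ?_
  have := congrArg (Int.cast : ℤ → ZMod v) hst
  push_cast at this
  rw [ZMod.natCast_self] at this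
  linear_combination this

theorem aux_arith_s17 (n c : ℕ) (hn : 0 < n) (hc : 0 < c) (r p a : ℤ)
    (hrn : IsCoprime r (n : ℤ)) (hac : IsCoprime a (c : ℤ))
    (hv : ((Nat.gcd n c : ℕ) : ℤ) ∣ a * p + r) :
    ∃ d : ℤ, -1 ≤ d ∧ d < ((c * n / Nat.gcd n c : ℕ) : ℤ) - 1 ∧
      (n : ℤ) ∣ p + d * r ∧ (c : ℤ) ∣ a * d - 1 := by
  obtain ⟨s, t, hst⟩ := hrn
  obtain ⟨α, β, hab⟩ := hac
  have hvn : ((Nat.gcd n c : ℕ) : ℤ) ∣ n := by exact_mod_cast Nat.gcd_dvd_left n c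
  have hvc : ((Nat.gcd n c : ℕ) : ℤ) ∣ c := by exact_mod_cast Nat.gcd_dvd_right n c
  have hvpos : 0 < Nat.gcd n c := Nat.gcd_pos_of_pos_left _ hn
  have key : ((Nat.gcd n c : ℕ) : ℤ) ∣ (-p * s - α) := by
    have e : -p * s - α = -α * s * (a * p + r) - α * t * n * 1 + c * (-β * p * s) := by
      linear_combination (p * s) * hab + α * hst
    rw [e]
    exact dvd_add (dvd_sub (Dvd.dvd.mul_left hv _) ((Dvd.dvd.mul_left hvn _).mul_right _))
      (hvc.mul_right _)
  obtain ⟨k, hk⟩ := key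
  have hbez := Nat.gcd_eq_gcd_ab n c
  obtain ⟨L, hL⟩ : ∃ L, L = c * n / Nat.gcd n c := ⟨_, rfl⟩
  have hnL : n ∣ L := by
    rw [hL, Nat.mul_comm, Nat.mul_div_assoc _ (Nat.gcd_dvd_right n c)]; exact dvd_mul_right _ _
  have hcL : c ∣ L := by
    rw [hL, Nat.mul_div_assoc _ (Nat.gcd_dvd_left n c)]; exact dvd_mul_right _ _
  have hLpos : 0 < L := by
    rw [hL]
    exact Nat.div_pos (Nat.le_of_dvd (by positivity)
      ((Nat.gcd_dvd_left n c).mul_left c)) hvpos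
  rw [← hL]
  have hLZ : (0 : ℤ) < L := by exact_mod_cast hLpos
  obtain ⟨d0, hd0⟩ : ∃ d0 : ℤ, d0 = α + c * (Nat.gcdB n c * k) := ⟨_, rfl⟩
  have hd0' : d0 = -p * s - n * (Nat.gcdA n c * k) := by
    rw [hd0]; rw [hbez] at hk; linear_combination -hk
  have hq := Int.emod_add_mul_ediv (d0 + 1) L
  have h0 := Int.emod_nonneg (d0 + 1) hLZ.ne'
  have h1 := Int.emod_lt_of_pos (d0 + 1) hLZ
  obtain ⟨x, hx⟩ := hnL
  obtain ⟨y, hy⟩ := hcL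
  have hx' : (L : ℤ) = n * x := by exact_mod_cast hx
  have hy' : (L : ℤ) = c * y := by exact_mod_cast hy
  generalize (d0 + 1) / (L : ℤ) = q at *
  generalize (d0 + 1) % (L : ℤ) = e at *
  refine ⟨e - 1, by linarith, by linarith, ?_, ?_⟩
  · have he : e - 1 = -p * s - n * (Nat.gcdA n c * k) - n * x * q := by
      rw [← hx']; linear_combination hq + hd0'
    exact ⟨t * p - r * (Nat.gcdA n c * k) - r * x * q, by
      rw [he]; linear_combination (-p) * hst⟩
  · have he : e - 1 = α + c * (Nat.gcdB n c * k) - c * y * q := by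
      rw [← hy']; linear_combination hq + hd0
    exact ⟨-β + a * (Nat.gcdB n c * k) - a * y * q, by
      rw [he]; linear_combination hab⟩

theorem aux_closure : ModularGroup.fd ⊆ closure stdFundDom := by
  rw [ModularGroup.fd_eq_closure_fdo]
  apply closure_mono
  rintro z ⟨h1, h2⟩
  refine ⟨?_, h2⟩
  rw [Complex.normSq_eq_norm_sq] at h1
  nlinarith [norm_nonneg (z : ℂ)]

theorem aux_coset (N : ℕ) (hN : 0 < N)
    (R : ℕ → Set ℕ) (hR : AdmissibleReps N R) (g : SL(2, ℤ)) :
    ∃ M : SL(2, ℤ), (M : Matrix (Fin 2) (Fin 2) ℤ) ∈ RepSet N R ∧ M * g ∈ Gamma0 N := by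
  obtain ⟨p, hp⟩ : ∃ p, p = g 0 0 := ⟨_, rfl⟩
  obtain ⟨r, hr⟩ : ∃ r, r = g 1 0 := ⟨_, rfl⟩
  have hdet : p * g 1 1 - g 0 1 * r = 1 := by
    have := g.det_coe
    rw [Matrix.det_fin_two] at this
    rw [hp, hr]; exact this
  by_cases hNr : (N : ℤ) ∣ r
  · refine ⟨1, Or.inl rfl, ?_⟩
    rw [one_mul, Gamma0_mem, ← hr]
    exact (ZMod.intCast_zmod_eq_zero_iff_dvd _ _).2 hNr
  obtain ⟨c, hc⟩ : ∃ c, c = Int.gcd r N := ⟨_, rfl⟩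
  have hcpos : 0 < c := by
    rw [hc]; exact Int.gcd_pos_of_ne_zero_right _ (by exact_mod_cast hN.ne')
  have hcN : c ∣ N := by
    have : (c : ℤ) ∣ N := by rw [hc]; exact Int.gcd_dvd_right ..
    exact_mod_cast this
  have hcr : (c : ℤ) ∣ r := by rw [hc]; exact Int.gcd_dvd_left ..
  have hclt : c < N := by
    refine lt_of_le_of_ne (Nat.le_of_dvd hN hcN) ?_
    rintro h; exact hNr (h ▸ hcr)
  obtain ⟨hR1, hR2⟩ := hR c hcN hcpos hclt
  have hbez := Int.gcd_eq_gcd_ab r N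
  rw [← hc] at hbez
  obtain ⟨n, hn⟩ := id hcN
  obtain ⟨r', hr'⟩ := id hcr
  have hdiv : N / c = n := by rw [hn]; exact Nat.mul_div_cancel_left _ hcpos
  have hnpos : 0 < n := Nat.pos_of_ne_zero (by rintro rfl; simp at hn; omega)
  have hcZ : (c : ℤ) ≠ 0 := by exact_mod_cast hcpos.ne'
  have hrn : IsCoprime r' (n : ℤ) := by
    refine ⟨Int.gcdA r N, Int.gcdB r N, mul_left_cancel₀ hcZ ?_⟩
    have hnZ : (N : ℤ) = c * n := by exact_mod_cast hn
    have e1 : (c : ℤ) = (c * r') * Int.gcdA r N + (c * n) * Int.gcdB r N := by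
      rw [← hr', ← hnZ]; exact hbez
    linear_combination -e1
  have hpc : IsCoprime p (c : ℤ) := by
    refine ⟨g 1 1, -(g 0 1 * r'), ?_⟩
    rw [hr'] at hdet; linear_combination hdet
  rw [hdiv] at hR2
  have hup := aux_unit_s17 (Nat.gcd n c) p c hpc (by exact_mod_cast Nat.gcd_dvd_right n c)
  have hur := aux_unit_s17 (Nat.gcd n c) r' n hrn (by exact_mod_cast Nat.gcd_dvd_left n c)
  obtain ⟨a, ⟨haR, hau⟩, -⟩ := hR2 (-(hur.unit * hup.unit⁻¹))
  have hac : IsCoprime (a : ℤ) (c : ℤ) := Nat.isCoprime_iff_coprime.2 (hR1 a haR)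
  have hv : ((Nat.gcd n c : ℕ) : ℤ) ∣ a * p + r' := by
    rw [← ZMod.intCast_zmod_eq_zero_iff_dvd]
    push_cast
    have h1 : ((hup.unit⁻¹ : (ZMod (Nat.gcd n c))ˣ) : ZMod (Nat.gcd n c)) * p = 1 :=
      hup.val_inv_mul
    rw [hau, Units.val_neg, Units.val_mul, IsUnit.unit_spec]
    linear_combination (-(r' : ZMod (Nat.gcd n c))) * h1
  obtain ⟨d, hd1, hd2, hd3, hd4⟩ := aux_arith_s17 n c hnpos hcpos r' p a hrn hac hv
  obtain ⟨b, hb⟩ := hd4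
  obtain ⟨M, hM⟩ : ∃ M : SL(2, ℤ), (M : Matrix (Fin 2) (Fin 2) ℤ) = !![(a : ℤ), b; c, d] :=
    ⟨⟨!![(a : ℤ), b; c, d], by rw [Matrix.det_fin_two_of]; linear_combination hb⟩, rfl⟩
  refine ⟨M,
    Or.inr ⟨c, hcN, hcpos, hclt, a, haR, d, hd1, ?_, ?_, ?_, ?_, ?_, ?_⟩, ?_⟩
  · rw [hdiv]; rw [← hn] at hd2; exact hd2
  · intro _
    exact (Int.modEq_iff_dvd.2 ⟨b, hb⟩).symm
  · simp [hM]
  · rw [hb, Int.mul_ediv_cancel_left _ hcZ]; simp [hM]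
  · simp [hM]
  · simp [hM]
  · rw [Gamma0_mem]
    refine (ZMod.intCast_zmod_eq_zero_iff_dvd _ _).2 ?_
    have e : (M * g) 1 0 = c * (p + d * r') := by
      rw [Matrix.SpecialLinearGroup.coe_mul, Matrix.mul_apply, Fin.sum_univ_two]
      simp [hM, ← hp, ← hr, hr']
      ring
    rw [e, hn]
    push_cast
    exact mul_dvd_mul_left _ hd3

open UpperHalfPlane in
/-- The union of the translates `M·𝒟̄` over `M ∈ A` meets every `Γ₀(N)`-orbit in `ℍ`:
for every `z ∈ ℍ` there are `γ ∈ Γ₀(N)` and `M ∈ A` with `M⁻¹·(γ·z) ∈ 𝒟̄`. -/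
theorem repSet_translates_cover (N : ℕ) (hN : 0 < N)
    (R : ℕ → Set ℕ) (hR : AdmissibleReps N R) (z : UpperHalfPlane) :
    ∃ γ ∈ Gamma0 N, ∃ M : SL(2, ℤ),
      (M : Matrix (Fin 2) (Fin 2) ℤ) ∈ RepSet N R ∧
      (M⁻¹ * (γ : SL(2, ℤ))) • z ∈ closure stdFundDom := by
  obtain ⟨g, hg⟩ := ModularGroup.exists_smul_mem_fd z
  obtain ⟨M, hM, hMg⟩ := aux_coset N hN R hR g
  refine ⟨M * g, hMg, M, hM, ?_⟩
  rw [inv_mul_cancel_left]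
  exact aux_closure hg
end
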